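/- Let D ≥ 1 and δ ≥ 0, let X₁, …, X_D be geodesic metric spaces each of which is δ-hyperbolic, and let Γ be a group acting by isometries on each Xᵢ; equip the product 𝕏 = X₁ × ⋯ × X_D with the supremum metric and let Γ act diagonally. If the action of Γ on 𝕏 is acylindrical and is not elliptic (some Γ-orbit in 𝕏 is unbounded), then either Γ contains a subgroup isomorphic to the free group on two generators, or there exists k with 1 ≤ k ≤ D such that Γ is virtually isomorphic to ℤᵏ, i.e. there are a finite-index subgroup Γ' ≤ Γ and a finite normal subgroup K ⊴ Γ' with Γ'/K isomorphic to ℤᵏ. -/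

import Mathlib

open Set Metric

/-- The two-point `ε`-coarse stabilizer `set_ε(x) ∩ set_ε(y)` of an isometric action. -/
def coarseStab2 (G : Type*) {Y : Type*} [Group G] [PseudoMetricSpace Y] [MulAction G Y]
    (ε : ℝ) (x y : Y) : Set G :=
  {g : G | dist (g • x) x ≤ ε ∧ dist (g • y) y ≤ ε}

/-- An action is *acylindrical* if for every `ε > 0` there are `R, N ≥ 0` such that
whenever `dist x y ≥ R` the two-point `ε`-coarse stabilizer has at most `N` elements. -/
def IsAcylindricalAction (G Y : Type*) [Group G] [PseudoMetricSpace Y] [MulAction G Y] : Prop :=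
  ∀ ε : ℝ, 0 < ε → ∃ (R : ℝ) (N : ℕ), 0 ≤ R ∧ ∀ x y : Y, R ≤ dist x y →
    (coarseStab2 G ε x y).Finite ∧ (coarseStab2 G ε x y).ncard ≤ N

/-- The Gromov product `⟨x,y⟩_o = (d(x,o) + d(y,o) − d(x,y))/2`. -/
noncomputable def gromovProd {X : Type*} [PseudoMetricSpace X] (o x y : X) : ℝ :=
  (dist x o + dist y o - dist x y) / 2

/-- `α` is a unit-speed geodesic from `x` to `y`, parametrized on `[0, dist x y]`. -/
def IsGeodesicSeg {X : Type*} [PseudoMetricSpace X] (x y : X) (α : ℝ → X) : Prop :=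
  α 0 = x ∧ α (dist x y) = y ∧
    ∀ s ∈ Set.Icc (0 : ℝ) (dist x y), ∀ t ∈ Set.Icc (0 : ℝ) (dist x y),
      dist (α s) (α t) = |s - t|

/-- A metric space is geodesic if any two points are joined by a unit-speed geodesic. -/
def IsGeodesicSpace (X : Type*) [PseudoMetricSpace X] : Prop :=
  ∀ x y : X, ∃ α : ℝ → X, IsGeodesicSeg x y α

/-- `X` is `δ`-hyperbolic: for all `a b c`, geodesics `α` from `a` to `b` and `γ` from `a`
to `c` satisfy `dist (α t) (γ t) ≤ δ` for `t ∈ [0, ⟨b,c⟩_a]`. -/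
def IsDeltaHyperbolic (X : Type*) [PseudoMetricSpace X] (δ : ℝ) : Prop :=
  ∀ a b c : X, ∀ α γ : ℝ → X, IsGeodesicSeg a b α → IsGeodesicSeg a c γ →
    ∀ t ∈ Set.Icc (0 : ℝ) (gromovProd a b c), dist (α t) (γ t) ≤ δ

/-!
In each factor the four-point condition gives a trichotomy: a ping-pong argument produces a free
subgroup, or the orbits are bounded, or a finite-index subgroup fixes a point of the Gromov
boundary. A group fixing a boundary point carries a Busemann quasimorphism `β` to `ℝ`, and every
finite set of its elements `f` moves long pieces of a geodesic towards that point by about `|β f|`.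
On a common finite-index subgroup the `β` of all factors therefore form a quasimorphism to `ℝ^D`
which acylindricity makes proper. A proper quasimorphism is bounded on commutators, so there are
finitely many of them and, by Schur's theorem, the commutator subgroup is finite. The
quasimorphism can then be homogenized on the abelianization, giving a homomorphism to `ℝ^D` with
finite kernel and discrete image.
-/

/-! ### Gromov products and hyperbolicity -/

section GromovProduct

variable {X : Type*} [PseudoMetricSpace X]

theorem gromovProd_comm (o x y : X) : gromovProd o x y = gromovProd o y x := by
  rw [gromovProd, gromovProd, dist_comm x y, add_comm (dist x o)]

theorem gromovProd_nonneg (o x y : X) : 0 ≤ gromovProd o x y :=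
  div_nonneg (sub_nonneg.2 (dist_triangle_right x y o)) zero_le_two

theorem gromovProd_le_dist_left (o x y : X) : gromovProd o x y ≤ dist x o := by
  have := dist_triangle_left y o x
  rw [gromovProd]
  linarith

theorem gromovProd_le_dist_right (o x y : X) : gromovProd o x y ≤ dist y o :=
  gromovProd_comm o x y ▸ gromovProd_le_dist_left o y x

@[simp]
theorem gromovProd_self (o x : X) : gromovProd o x x = dist x o := by
  simp [gromovProd]

@[simp]
theorem gromovProd_base_right (o x : X) : gromovProd o x o = 0 := by
  simp [gromovProd]

theorem gromovProd_eq_dist_sub (o x y : X) : gromovProd o x y = dist x o - gromovProd x o y := by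
  rw [gromovProd, gromovProd, dist_comm o x, dist_comm y x, dist_comm o y]
  ring

theorem gromovProd_le_add_dist_left (o x x' y : X) :
    gromovProd o x y ≤ gromovProd o x' y + dist x x' := by
  have := dist_triangle x x' o
  have := dist_triangle_left x' y x
  rw [gromovProd, gromovProd]
  linarith

theorem gromovProd_le_add_dist_base (o o' x y : X) :
    gromovProd o x y ≤ gromovProd o' x y + dist o o' := by
  have := dist_triangle_right x o o'
  have := dist_triangle_right y o o'
  rw [gromovProd, gromovProd]
  linarith

theorem IsGeodesicSeg.dist_left {x y : X} {α : ℝ → X} (h : IsGeodesicSeg x y α) {t : ℝ}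
    (ht : t ∈ Icc 0 (dist x y)) : dist (α t) x = t := by
  have := h.2.2 t ht 0 ⟨le_rfl, dist_nonneg⟩
  rwa [h.1, sub_zero, abs_of_nonneg ht.1] at this

theorem IsGeodesicSeg.dist_right {x y : X} {α : ℝ → X} (h : IsGeodesicSeg x y α) {t : ℝ}
    (ht : t ∈ Icc 0 (dist x y)) : dist (α t) y = dist x y - t := by
  have := h.2.2 t ht _ ⟨dist_nonneg, le_rfl⟩
  rwa [h.2.1, abs_sub_comm, abs_of_nonneg (sub_nonneg.2 ht.2)] at this

/-- Gromov's four-point form of `δ`-hyperbolicity, which makes sense without geodesics. -/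
def IsFourPointHyperbolic (X : Type*) [PseudoMetricSpace X] (δ : ℝ) : Prop :=
  ∀ o x y z : X, min (gromovProd o x y) (gromovProd o y z) - δ ≤ gromovProd o x z

theorem IsDeltaHyperbolic.isFourPointHyperbolic {δ : ℝ} (h : IsDeltaHyperbolic X δ)
    (hgeo : IsGeodesicSpace X) : IsFourPointHyperbolic X δ := by
  intro o x y z
  obtain ⟨α, hα⟩ := hgeo o x
  obtain ⟨β, hβ⟩ := hgeo o y
  obtain ⟨γ, hγ⟩ := hgeo o z
  set t := min (gromovProd o x y) (gromovProd o y z)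
  have ht : 0 ≤ t := le_min (gromovProd_nonneg ..) (gromovProd_nonneg ..)
  have htx : t ≤ dist o x :=
    (min_le_left ..).trans (dist_comm o x ▸ gromovProd_le_dist_left o x y)
  have htz : t ≤ dist o z :=
    (min_le_right ..).trans (dist_comm o z ▸ gromovProd_le_dist_right o y z)
  have hαβ := h o x y α β hα hβ t ⟨ht, min_le_left ..⟩
  have hβγ := h o y z β γ hβ hγ t ⟨ht, min_le_right ..⟩
  have hx := hα.dist_right ⟨ht, htx⟩
  have hz := hγ.dist_right ⟨ht, htz⟩
  have hαγ := dist_triangle (α t) (β t) (γ t)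
  have hxz := dist_triangle4 x (α t) (γ t) z
  rw [dist_comm x (α t)] at hxz
  rw [gromovProd, dist_comm x o, dist_comm z o]
  linarith

namespace IsFourPointHyperbolic

variable {δ : ℝ} {o x y z : X}

theorem nonneg (h : IsFourPointHyperbolic X δ) (o : X) : 0 ≤ δ := by
  simpa using h o o o o

theorem lt_gromovProd (h : IsFourPointHyperbolic X δ) {c : ℝ} (hxy : c < gromovProd o x y)
    (hyz : c < gromovProd o y z) : c - δ < gromovProd o x z :=
  (sub_lt_sub_right (lt_min hxy hyz) δ).trans_le (h o x y z)

theorem gromovProd_le_of_lt (h : IsFourPointHyperbolic X δ) {c : ℝ} (hxz : gromovProd o x z ≤ c)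
    (hyz : c + δ < gromovProd o y z) : gromovProd o x y ≤ c + δ := by
  by_contra! hxy
  linarith [h.lt_gromovProd hxy hyz]

theorem dist_add_dist_le (h : IsFourPointHyperbolic X δ) (a b c d : X) :
    dist a b + dist c d - 2 * δ ≤ max (dist a c + dist b d) (dist a d + dist b c) := by
  have hmin := h d a c b
  rw [sub_le_iff_le_add, min_le_iff] at hmin
  simp only [gromovProd, dist_comm c b] at hmin
  rw [le_max_iff]
  rcases hmin with hmin | hmin
  · left; linarith
  · right; linarith

end IsFourPointHyperbolic

end GromovProduct

section IsometricAction

variable {X : Type*} [PseudoMetricSpace X] {G : Type*} [Group G] [MulAction G X]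
  [IsIsometricSMul G X]

instance (H : Subgroup G) : IsIsometricSMul H X :=
  ⟨fun g => isometry_smul X (g : G)⟩

theorem gromovProd_smul (g : G) (o x y : X) :
    gromovProd (g • o) (g • x) (g • y) = gromovProd o x y := by
  simp only [gromovProd, dist_smul]

theorem gromovProd_smul_base (g : G) (o x y : X) :
    gromovProd (g • o) x y = gromovProd o (g⁻¹ • x) (g⁻¹ • y) := by
  rw [← gromovProd_smul g o, smul_inv_smul, smul_inv_smul]

theorem gromovProd_sub_dist_le_smul (g : G) (o x y : X) :
    gromovProd o x y - dist (g • o) o ≤ gromovProd o (g • x) (g • y) := by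
  rw [← gromovProd_smul g o x y, sub_le_iff_le_add]
  exact gromovProd_le_add_dist_base (g • o) o (g • x) (g • y)

theorem dist_inv_smul_left (g : G) (x y : X) : dist (g⁻¹ • x) y = dist x (g • y) := by
  rw [← dist_smul g, smul_inv_smul]

theorem dist_inv_smul_right (g : G) (x y : X) : dist x (g⁻¹ • y) = dist (g • x) y := by
  rw [← dist_smul g, smul_inv_smul]

theorem dist_inv_smul_self (g : G) (x : X) : dist (g⁻¹ • x) x = dist (g • x) x := by
  rw [dist_inv_smul_left, dist_comm]

theorem IsFourPointHyperbolic.le_gromovProd_smul_prod {δ : ℝ} (h : IsFourPointHyperbolic X δ)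
    (o : X) {L c : ℝ} (hL : 2 * c + 2 * δ < L) (a : G) (w : List G) (hc : 0 ≤ c)
    (hlen : ∀ x ∈ a :: w, L ≤ dist (x • o) o)
    (hturn : (a :: w).IsChain fun x y => gromovProd o (x⁻¹ • o) (y • o) ≤ c) :
    L - c - δ ≤ gromovProd o (a • o) ((a :: w).prod • o) := by
  induction w generalizing a with
  | nil =>
    have := hlen a List.mem_cons_self
    have := h.nonneg o
    simp only [List.prod_singleton, gromovProd_self]
    linarith
  | cons b w ih =>
    rw [List.isChain_cons_cons] at hturn
    have htail := ih b (fun x hx => hlen x (List.mem_cons_of_mem _ hx)) hturn.2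
    have hback : gromovProd o (a⁻¹ • o) ((b :: w).prod • o) ≤ c + δ := by
      refine h.gromovProd_le_of_lt hturn.1 ?_
      rw [gromovProd_comm]
      linarith
    have := hlen a List.mem_cons_self
    rw [List.prod_cons, gromovProd_eq_dist_sub, gromovProd_smul_base, mul_smul, inv_smul_smul]
    linarith

end IsometricAction

/-! ### Free subgroups -/

section Letter

variable {G : Type*} [Group G]

/-- The letter `g` or `g⁻¹`, with the sign convention of `FreeGroup`. -/
def letter (g : G) (b : Bool) : G :=
  cond b g g⁻¹

theorem letter_inv (g : G) (b : Bool) : (letter g b)⁻¹ = letter g !b := by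
  cases b <;> simp [letter]

theorem letter_pow (g : G) (b : Bool) (n : ℕ) : letter (g ^ n) b = letter g b ^ n := by
  cases b <;> simp [letter]

theorem letter_conj (h g : G) (b : Bool) : letter (h * g * h⁻¹) b = h * letter g b * h⁻¹ := by
  cases b <;> simp [letter, mul_assoc]

theorem lift_eq_prod_letter {α : Type*} [DecidableEq α] (f : α → G) (w : FreeGroup α) :
    FreeGroup.lift f w = (w.toWord.map fun p => letter (f p.1) p.2).prod := by
  conv_lhs => rw [← FreeGroup.mk_toWord (x := w), FreeGroup.lift_mk]
  rfl

end Letter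

section Free

variable {X : Type*} [PseudoMetricSpace X] {G : Type*} [Group G] [MulAction G X]
  [IsIsometricSMul G X] {α : Type*}

theorem IsFourPointHyperbolic.lift_injective {δ : ℝ} (h : IsFourPointHyperbolic X δ) (o : X)
    {L c : ℝ} (hL : 2 * c + 2 * δ < L) (f : α → G)
    (hlen : ∀ p : α × Bool, L ≤ dist (letter (f p.1) p.2 • o) o)
    (hturn : ∀ p q : α × Bool, p ≠ q →
      gromovProd o (letter (f p.1) p.2 • o) (letter (f q.1) q.2 • o) ≤ c) :
    Function.Injective (FreeGroup.lift f) := by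
  classical
  refine (injective_iff_map_eq_one _).2 fun w hw => by_contra fun hne => ?_
  have hred : w.toWord.IsChain fun p q => p.1 = q.1 → p.2 = q.2 := FreeGroup.isReduced_toWord
  obtain ⟨⟨i, b⟩, l, hl⟩ :=
    List.exists_cons_of_ne_nil fun hnil => hne (FreeGroup.toWord_eq_nil_iff.1 hnil)
  have hc : 0 ≤ c := (gromovProd_nonneg ..).trans (hturn (i, true) (i, false) (by simp))
  rw [lift_eq_prod_letter, hl] at hw
  rw [hl] at hred
  have hchain : (((i, b) :: l).map fun p => letter (f p.1) p.2).IsChain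
      fun x y => gromovProd o (x⁻¹ • o) (y • o) ≤ c := by
    rw [List.isChain_map]
    refine hred.imp fun p q hpq => ?_
    rw [letter_inv]
    refine hturn (p.1, !p.2) q fun heq => ?_
    simp [← heq] at hpq
  have hlen' : ∀ x ∈ ((i, b) :: l).map fun p => letter (f p.1) p.2, L ≤ dist (x • o) o :=
    List.forall_mem_map.2 fun p _ => hlen p
  have := h.le_gromovProd_smul_prod o hL _ _ hc hlen' hchain
  rw [List.map_cons] at hw
  simp only [hw, one_smul, gromovProd_base_right] at this
  linarith [h.nonneg o]

end Free

/-! ### Points at infinity -/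

section Boundary

open Filter Pointwise

variable {X : Type*} [PseudoMetricSpace X] {δ : ℝ} {o : X} {u v w : ℕ → X}

/-- `u` converges to a point of the Gromov boundary. -/
def IsGromovSeq (o : X) (u : ℕ → X) : Prop :=
  Tendsto (fun p : ℕ × ℕ => gromovProd o (u p.1) (u p.2)) atTop atTop

/-- `u` and `v` converge to the same boundary point, provided that they converge at all. -/
def Asymptotic (o : X) (u v : ℕ → X) : Prop :=
  Tendsto (fun n => gromovProd o (u n) (v n)) atTop atTop

/-- `u` and `v` stay apart at infinity; only terms of equal index are compared. -/
def IsTransverse (o : X) (u v : ℕ → X) : Prop :=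
  BddAbove (range fun n => gromovProd o (u n) (v n))

theorem IsFourPointHyperbolic.tendsto_gromovProd (h : IsFourPointHyperbolic X δ) {ι : Type*}
    {l : Filter ι} {x y z : ι → X} (hxy : Tendsto (fun i => gromovProd o (x i) (y i)) l atTop)
    (hyz : Tendsto (fun i => gromovProd o (y i) (z i)) l atTop) :
    Tendsto (fun i => gromovProd o (x i) (z i)) l atTop := by
  refine tendsto_atTop_mono (fun i => h o (x i) (y i) (z i)) ?_
  simp only [sub_eq_add_neg]
  exact tendsto_atTop_add_const_right l (-δ) (tendsto_inf_atTop _ hxy hyz)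

theorem Asymptotic.symm (h : Asymptotic o u v) : Asymptotic o v u := by
  simpa only [Asymptotic, gromovProd_comm] using h

theorem Asymptotic.trans (huv : Asymptotic o u v) (h : IsFourPointHyperbolic X δ)
    (hvw : Asymptotic o v w) : Asymptotic o u w :=
  h.tendsto_gromovProd huv hvw

theorem IsGromovSeq.asymptotic_self (hu : IsGromovSeq o u) : Asymptotic o u u :=
  (hu.comp tendsto_atTop_diagonal :)

theorem IsGromovSeq.exists_forall_lt (hu : IsGromovSeq o u) (T : ℝ) :
    ∃ N, ∀ n m, N ≤ n → N ≤ m → T < gromovProd o (u n) (u m) :=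
  eventually_atTop_prod_self.1 (hu.eventually_gt_atTop T)

theorem IsTransverse.symm (h : IsTransverse o u v) : IsTransverse o v u := by
  simpa only [IsTransverse, gromovProd_comm] using h

theorem IsTransverse.of_dist_le (h : IsTransverse o u v) {c : ℝ}
    (hc : ∀ n, dist (w n) (u n) ≤ c) : IsTransverse o w v := by
  obtain ⟨C, hC⟩ := h
  refine ⟨C + c, forall_mem_range.2 fun n => ?_⟩
  linarith [gromovProd_le_add_dist_left o (w n) (u n) (v n), hc n, hC (mem_range_self n)]

theorem IsFourPointHyperbolic.isTransverse_of_not_asymptotic (h : IsFourPointHyperbolic X δ)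
    (hu : IsGromovSeq o u) (hv : IsGromovSeq o v) (huv : ¬ Asymptotic o u v) :
    IsTransverse o u v := by
  by_contra hbdd
  refine huv (tendsto_atTop.2 fun T => ?_)
  obtain ⟨N, hN⟩ := hu.exists_forall_lt (T + 2 * δ)
  obtain ⟨M, hM⟩ := hv.exists_forall_lt (T + 2 * δ)
  have hfreq : ∃ᶠ k in atTop, T + 2 * δ < gromovProd o (u k) (v k) := fun hev =>
    hbdd (IsBoundedUnder.bddAbove_range ⟨T + 2 * δ, by simpa using hev⟩)
  obtain ⟨k, hk, hNk, hMk⟩ :=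
    (hfreq.and_eventually ((eventually_ge_atTop N).and (eventually_ge_atTop M))).exists
  filter_upwards [eventually_ge_atTop N, eventually_ge_atTop M] with n hNn hMn
  have huk := h.lt_gromovProd (hN n k hNn hNk) hk
  have hvk := hM k n hMk hMn
  have := h.lt_gromovProd huk (by linarith [h.nonneg o])
  linarith

variable {G : Type*} [Group G] [MulAction G X]

/-- The whole group `G` fixes a point of the Gromov boundary. -/
def FixesBoundaryPoint (G : Type*) [Group G] [MulAction G X] (o : X) : Prop :=
  ∃ u : ℕ → X, IsGromovSeq o u ∧ ∀ g : G, Asymptotic o (g • u) u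

theorem FixesBoundaryPoint.of_le {H K : Subgroup G} (hK : FixesBoundaryPoint K o) (hHK : H ≤ K) :
    FixesBoundaryPoint H o :=
  let ⟨u, hu, hfix⟩ := hK
  ⟨u, hu, fun g => hfix ⟨g, hHK g.2⟩⟩

variable [IsIsometricSMul G X]

theorem tendsto_gromovProd_smul (g : G) {ι : Type*} {l : Filter ι} {x y : ι → X}
    (h : Tendsto (fun i => gromovProd o (x i) (y i)) l atTop) :
    Tendsto (fun i => gromovProd o (g • x i) (g • y i)) l atTop := by
  refine tendsto_atTop_mono (fun i => gromovProd_sub_dist_le_smul g o (x i) (y i)) ?_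
  simp only [sub_eq_add_neg]
  exact tendsto_atTop_add_const_right l (-dist (g • o) o) h

theorem IsGromovSeq.smul (hu : IsGromovSeq o u) (g : G) : IsGromovSeq o (g • u) :=
  tendsto_gromovProd_smul g hu

theorem Asymptotic.smul (h : Asymptotic o u v) (g : G) : Asymptotic o (g • u) (g • v) :=
  tendsto_gromovProd_smul g h

theorem IsTransverse.smul (h : IsTransverse o u v) (g : G) : IsTransverse o (g • u) (g • v) := by
  obtain ⟨C, hC⟩ := h
  refine ⟨C + dist (g • o) o, forall_mem_range.2 fun n => ?_⟩
  have := gromovProd_le_add_dist_base o (g • o) (g • u n) (g • v n)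
  rw [gromovProd_smul, dist_comm] at this
  exact this.trans (add_le_add_left (hC (mem_range_self n)) _)

/-- The stabilizer of the boundary point to which `u` converges. -/
def boundaryStabilizer (G : Type*) [Group G] [MulAction G X] [IsIsometricSMul G X]
    (h : IsFourPointHyperbolic X δ) (hu : IsGromovSeq o u) : Subgroup G where
  carrier := {g | Asymptotic o (g • u) u}
  one_mem' := by simpa using hu.asymptotic_self
  mul_mem' {a b} ha hb := by
    rw [mem_ofPred_eq, mul_smul]
    exact (Asymptotic.smul hb a).trans h ha
  inv_mem' {a} ha := by simpa using (Asymptotic.smul ha a⁻¹).symm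

theorem mem_boundaryStabilizer {h : IsFourPointHyperbolic X δ} {hu : IsGromovSeq o u} {g : G} :
    g ∈ boundaryStabilizer G h hu ↔ Asymptotic o (g • u) u :=
  Iff.rfl

theorem fixesBoundaryPoint_boundaryStabilizer (h : IsFourPointHyperbolic X δ)
    (hu : IsGromovSeq o u) : FixesBoundaryPoint (boundaryStabilizer G h hu) o :=
  ⟨u, hu, fun g => g.2⟩

-- `{g | g • s i ~ s j}` is empty or a left coset of the stabilizer of the limit of `s i`, so
-- B. H. Neumann's lemma applies.
theorem exists_finiteIndex_boundaryStabilizer {ι : Type*} [Finite ι]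
    (h : IsFourPointHyperbolic X δ) {s : ι → ℕ → X} (hs : ∀ i, IsGromovSeq o (s i))
    (hcover : ∀ g : G, ∃ i j, Asymptotic o (g • s i) (s j)) :
    ∃ i, (boundaryStabilizer G h (hs i)).FiniteIndex := by
  have := Fintype.ofFinite ι
  have hcoset : ∀ p : ι × ι, ∃ c : G, ∀ g : G, Asymptotic o (g • s p.1) (s p.2) →
      c⁻¹ * g ∈ boundaryStabilizer G h (hs p.1) := by
    intro p
    by_cases hp : ∃ c : G, Asymptotic o (c • s p.1) (s p.2)
    · obtain ⟨c, hc⟩ := hp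
      refine ⟨c, fun g hg => ?_⟩
      simpa [mem_boundaryStabilizer, mul_smul] using (hg.trans h hc.symm).smul c⁻¹
    · exact ⟨1, fun g hg => absurd ⟨g, hg⟩ hp⟩
  choose c hc using hcoset
  have hunion : ⋃ p ∈ Finset.univ, c p • (boundaryStabilizer G h (hs p.1) : Set G) = univ := by
    refine eq_univ_of_forall fun g => ?_
    obtain ⟨i, j, hij⟩ := hcover g
    simp only [Finset.mem_univ, iUnion_true, mem_iUnion, mem_leftCoset_iff]
    exact ⟨(i, j), hc (i, j) g hij⟩
  obtain ⟨p, -, hp⟩ := Subgroup.exists_finiteIndex_of_leftCoset_cover hunion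
  exact ⟨p.1, hp⟩

end Boundary

/-! ### Loxodromic elements -/

section Loxodromic

open Filter

variable {X : Type*} [PseudoMetricSpace X] {G : Type*} [Group G] [MulAction G X]
  {δ : ℝ} {o : X} {g : G}

/-- A local criterion at the base point `o` for `g` to be loxodromic: the displacement exceeds the
backtracking, so that the broken path through the points `g ^ n • o` is a quasi-geodesic. -/
def IsLoxodromicAt (δ : ℝ) (o : X) (g : G) : Prop :=
  2 * gromovProd o (g • o) (g⁻¹ • o) + (3 * δ + 1) ≤ dist (g • o) o

/-- The orbit of `o` under the nonnegative powers of `g`. -/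
def powOrbit (o : X) (g : G) (n : ℕ) : X :=
  g ^ n • o

theorem IsLoxodromicAt.le_dist (hg : IsLoxodromicAt δ o g) :
    2 * gromovProd o (g • o) (g⁻¹ • o) + (3 * δ + 1) ≤ dist (g • o) o :=
  hg

variable [IsIsometricSMul G X]

theorem dist_letter_smul (g : G) (b : Bool) (o : X) :
    dist (letter g b • o) o = dist (g • o) o := by
  cases b <;> simp [letter, dist_inv_smul_self]

theorem dist_powOrbit_conj (k g : G) (n : ℕ) :
    dist (powOrbit o (k * g * k⁻¹) n) (k • powOrbit o g n) = dist (k • o) o := by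
  rw [powOrbit, powOrbit, conj_pow, mul_smul, mul_smul, dist_smul, dist_smul, dist_inv_smul_self]

theorem IsTransverse.powOrbit_conj {k k' g g' : G}
    (h : IsTransverse o (k • powOrbit o g) (k' • powOrbit o g')) :
    IsTransverse o (powOrbit o (k * g * k⁻¹)) (powOrbit o (k' * g' * k'⁻¹)) :=
  ((h.of_dist_le fun n => (dist_powOrbit_conj k g n).le).symm.of_dist_le
    fun n => (dist_powOrbit_conj k' g' n).le).symm

namespace IsLoxodromicAt

theorem inv (hg : IsLoxodromicAt δ o g) : IsLoxodromicAt δ o g⁻¹ := by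
  rwa [IsLoxodromicAt, inv_inv, gromovProd_comm, dist_inv_smul_self]

theorem letter_apply (hg : IsLoxodromicAt δ o g) (b : Bool) :
    IsLoxodromicAt δ o (letter g b) := by
  cases b
  · exact hg.inv
  · exact hg

theorem le_gromovProd_pow_succ (hg : IsLoxodromicAt δ o g) (h : IsFourPointHyperbolic X δ)
    (n : ℕ) : dist (g • o) o - gromovProd o (g • o) (g⁻¹ • o) - δ ≤
      gromovProd o (g • o) (g ^ (n + 1) • o) := by
  have hL : 2 * gromovProd o (g • o) (g⁻¹ • o) + 2 * δ < dist (g • o) o := by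
    linarith [h.nonneg o, hg.le_dist]
  have := h.le_gromovProd_smul_prod o hL g (List.replicate n g) (gromovProd_nonneg ..)
    (fun x hx => by rw [← List.replicate_succ] at hx; rw [List.eq_of_mem_replicate hx])
    (List.isChain_replicate_of_rel (n + 1) (gromovProd_comm ..).le)
  rwa [← List.replicate_succ, List.prod_replicate] at this

theorem gromovProd_inv_pow_le (hg : IsLoxodromicAt δ o g) (h : IsFourPointHyperbolic X δ) (n : ℕ) :
    gromovProd o (g⁻¹ • o) (g ^ n • o) ≤ gromovProd o (g • o) (g⁻¹ • o) + δ := by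
  cases n with
  | zero => simpa using add_nonneg (gromovProd_nonneg ..) (h.nonneg o)
  | succ n =>
    refine h.gromovProd_le_of_lt (gromovProd_comm ..).le ?_
    rw [gromovProd_comm o _ (g • o)]
    linarith [hg.le_gromovProd_pow_succ h n, h.nonneg o, hg.le_dist]

theorem le_dist_pow (hg : IsLoxodromicAt δ o g) (h : IsFourPointHyperbolic X δ) (n : ℕ) :
    (n : ℝ) ≤ dist (g ^ n • o) o := by
  induction n with
  | zero => simp
  | succ n ih =>
    have hback := hg.gromovProd_inv_pow_le h n
    rw [gromovProd, dist_inv_smul_self, dist_inv_smul_left g o (g ^ n • o), ← mul_smul,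
      ← pow_succ', dist_comm o] at hback
    push_cast
    linarith [hg.le_dist, h.nonneg o]

theorem gromovProd_pow_inv_pow_le (hg : IsLoxodromicAt δ o g) (h : IsFourPointHyperbolic X δ)
    (n m : ℕ) :
    gromovProd o (g ^ n • o) (g⁻¹ ^ m • o) ≤ gromovProd o (g • o) (g⁻¹ • o) + 2 * δ := by
  have hδ := h.nonneg o
  cases m with
  | zero => simpa using add_nonneg (gromovProd_nonneg o (g • o) (g⁻¹ • o)) (by linarith)
  | succ m =>
    have hstart := hg.inv.le_gromovProd_pow_succ h m
    have hback := hg.gromovProd_inv_pow_le h n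
    rw [gromovProd_comm] at hback
    rw [inv_inv, dist_inv_smul_self, gromovProd_comm o _ (g • o),
      gromovProd_comm o _ (g⁻¹ ^ (m + 1) • o)] at hstart
    have := h.gromovProd_le_of_lt hback (y := g⁻¹ ^ (m + 1) • o) (by linarith [hg.le_dist])
    linarith

theorem min_sub_le_gromovProd_pow (hg : IsLoxodromicAt δ o g) (h : IsFourPointHyperbolic X δ)
    (n m : ℕ) : min (n : ℝ) m - (gromovProd o (g • o) (g⁻¹ • o) + 2 * δ) ≤
      gromovProd o (g ^ n • o) (g ^ m • o) := by
  wlog hnm : n ≤ m generalizing n m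
  · rw [gromovProd_comm o (g ^ n • o), min_comm]
    exact this m n (le_of_not_ge hnm)
  obtain ⟨k, rfl⟩ := Nat.exists_eq_add_of_le hnm
  have htr := hg.gromovProd_pow_inv_pow_le h k n
  rw [gromovProd_eq_dist_sub o (g ^ n • o), gromovProd_smul_base, pow_add, mul_smul, inv_smul_smul,
    ← inv_pow, gromovProd_comm o _ (g ^ k • o)]
  linarith [hg.le_dist_pow h n, min_le_left (n : ℝ) (n + k : ℕ)]

theorem isGromovSeq_powOrbit (hg : IsLoxodromicAt δ o g) (h : IsFourPointHyperbolic X δ) :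
    IsGromovSeq o (powOrbit o g) := by
  refine tendsto_atTop_mono (fun p => hg.min_sub_le_gromovProd_pow h p.1 p.2) ?_
  simp only [sub_eq_add_neg, ← prod_atTop_atTop_eq]
  exact tendsto_atTop_add_const_right _ _ (tendsto_inf_atTop _
    (tendsto_natCast_atTop_atTop.comp tendsto_fst) (tendsto_natCast_atTop_atTop.comp tendsto_snd))

theorem isTransverse_powOrbit_letter (hg : IsLoxodromicAt δ o g) (h : IsFourPointHyperbolic X δ)
    {a b : Bool} (hab : a ≠ b) :
    IsTransverse o (powOrbit o (letter g a)) (powOrbit o (letter g b)) := by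
  rw [Bool.eq_not_of_ne hab.symm, ← letter_inv]
  exact ⟨_, forall_mem_range.2 fun n => (hg.letter_apply a).gromovProd_pow_inv_pow_le h n n⟩

theorem tendsto_dist_powOrbit_conj (hg : IsLoxodromicAt δ o g) (h : IsFourPointHyperbolic X δ)
    (k : G) : Tendsto (fun n => dist ((k * g * k⁻¹) ^ n • o) o) atTop atTop := by
  refine tendsto_atTop_mono (fun n => ?_)
    (tendsto_atTop_add_const_right _ (-(2 * dist (k • o) o)) tendsto_natCast_atTop_atTop)
  have htri := dist_triangle4 (k • powOrbit o g n) (powOrbit o (k * g * k⁻¹) n) o (k • o)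
  rw [dist_smul, dist_comm _ (powOrbit o (k * g * k⁻¹) n), dist_powOrbit_conj, dist_comm o,
    powOrbit, powOrbit] at htri
  linarith [hg.le_dist_pow h n]

end IsLoxodromicAt

theorem IsFourPointHyperbolic.exists_lift_pow_injective (h : IsFourPointHyperbolic X δ)
    {α : Type*} [Finite α] (f : α → G)
    (hf : ∀ i, Tendsto (fun n => dist (f i ^ n • o) o) atTop atTop)
    (htr : ∀ p q : α × Bool, p ≠ q →
      IsTransverse o (powOrbit o (letter (f p.1) p.2)) (powOrbit o (letter (f q.1) q.2))) :
    ∃ N : ℕ, Function.Injective (FreeGroup.lift fun i => f i ^ N) := by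
  choose C hC using htr
  obtain ⟨c, hc⟩ : ∃ c, ∀ p q hpq, C p q hpq ≤ c := by
    obtain ⟨c, hc⟩ := Finite.bddAbove_range fun r : { r : (α × Bool) × (α × Bool) // r.1 ≠ r.2 } =>
      C r.1.1 r.1.2 r.2
    exact ⟨c, fun p q hpq => hc ⟨⟨(p, q), hpq⟩, rfl⟩⟩
  obtain ⟨N, hN⟩ := (eventually_all.2 fun i =>
    (hf i).eventually_ge_atTop (2 * c + 2 * δ + 1)).exists
  refine ⟨N, h.lift_injective o (lt_add_one (2 * c + 2 * δ)) _ (fun p => ?_)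
    fun p q hpq => ?_⟩
  · rw [dist_letter_smul]
    exact hN p.1
  · rw [letter_pow, letter_pow]
    exact (hC p q hpq (mem_range_self N)).trans (hc p q hpq)

theorem IsLoxodromicAt.exists_freeGroup_injective (hg : IsLoxodromicAt δ o g)
    (h : IsFourPointHyperbolic X δ) (k : G)
    (hk : ∀ a b, IsTransverse o (k • powOrbit o (letter g a)) (powOrbit o (letter g b))) :
    ∃ f : FreeGroup (Fin 2) →* G, Function.Injective f := by
  let c : Fin 2 → G := ![1, k]
  have htr : ∀ p q : Fin 2 × Bool, p ≠ q →
      IsTransverse o (c p.1 • powOrbit o (letter g p.2)) (c q.1 • powOrbit o (letter g q.2)) := by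
    rintro ⟨i, a⟩ ⟨j, b⟩ hne
    by_cases hij : i = j
    · subst hij
      exact (hg.isTransverse_powOrbit_letter h fun hab => hne (congrArg (Prod.mk i) hab)).smul (c i)
    · fin_cases i <;> fin_cases j
      · exact absurd rfl hij
      · simpa [c] using (hk b a).symm
      · simpa [c] using hk a b
      · exact absurd rfl hij
  obtain ⟨N, hN⟩ := h.exists_lift_pow_injective (fun i => c i * g * (c i)⁻¹)
    (fun i => hg.tendsto_dist_powOrbit_conj h (c i)) fun p q hpq => by
      simpa only [letter_conj] using (htr p q hpq).powOrbit_conj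
  exact ⟨_, hN⟩

end Loxodromic

section Trichotomy

open Filter

variable {X : Type*} [PseudoMetricSpace X] {G : Type*} [Group G] [MulAction G X]
  {δ : ℝ} {o : X}

theorem exists_tendsto_dist_smul_of_not_isBounded_orbit
    (hunb : ¬ Bornology.IsBounded (MulAction.orbit G o)) :
    ∃ g : ℕ → G, Tendsto (fun n => dist (g n • o) o) atTop atTop := by
  have hfar : ∀ n : ℕ, ∃ g : G, (n : ℝ) ≤ dist (g • o) o := by
    by_contra! hclose
    obtain ⟨n, hn⟩ := hclose
    exact hunb (isBounded_closedBall.subset (range_subset_iff.2 fun g => (hn g).le))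
  choose g hg using hfar
  exact ⟨g, tendsto_atTop_mono hg tendsto_natCast_atTop_atTop⟩

variable [IsIsometricSMul G X]

-- If the bound failed, then any two consecutive terms of
-- `g • o, g⁻¹ • o, (g⁻¹ * k) • o, (k⁻¹ * g) • o, k⁻¹ • o, k • o`
-- would have a large Gromov product, hence so would the two ends.
theorem IsFourPointHyperbolic.min_dist_sub_le_gromovProd (h : IsFourPointHyperbolic X δ) {g k : G}
    (hg : ¬ IsLoxodromicAt δ o g) (hk : ¬ IsLoxodromicAt δ o k)
    (hgk : ¬ IsLoxodromicAt δ o (g⁻¹ * k)) :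
    (min (dist (g • o) o) (dist (k • o) o) - (11 * δ + 1)) / 2 ≤ gromovProd o (g • o) (k • o) := by
  by_contra! hlt
  set P := gromovProd o (g • o) (k • o)
  have hg_inv : gromovProd o (g⁻¹ • o) ((g⁻¹ * k) • o) = dist (g • o) o - P := by
    rw [gromovProd_eq_dist_sub, dist_inv_smul_self, gromovProd_smul_base, inv_inv, mul_smul,
      smul_inv_smul]
  have hk_inv : gromovProd o ((k⁻¹ * g) • o) (k⁻¹ • o) = dist (k • o) o - P := by
    rw [gromovProd_comm, gromovProd_eq_dist_sub, dist_inv_smul_self, gromovProd_smul_base, inv_inv,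
      mul_smul, smul_inv_smul, gromovProd_comm]
  have hdist : dist ((g⁻¹ * k) • o) o = dist (g • o) o + dist (k • o) o - 2 * P := by
    rw [mul_smul, dist_inv_smul_left]
    simp only [P, gromovProd, dist_comm (k • o) (g • o)]
    ring
  rw [IsLoxodromicAt, not_le] at hg hk hgk
  rw [mul_inv_rev, inv_inv, hdist] at hgk
  have := min_le_left (dist (g • o) o) (dist (k • o) o)
  have := min_le_right (dist (g • o) o) (dist (k • o) o)
  have : 0 ≤ P := gromovProd_nonneg ..
  have := h.nonneg o
  have h₁ : P + 4 * δ < gromovProd o (g • o) (g⁻¹ • o) := by linarith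
  have h₂ := h.lt_gromovProd h₁ (z := (g⁻¹ * k) • o) (by linarith)
  have h₃ := h.lt_gromovProd h₂ (z := (k⁻¹ * g) • o) (by linarith)
  have h₄ := h.lt_gromovProd h₃ (z := k⁻¹ • o) (by linarith)
  have h₅ := h.lt_gromovProd h₄ (z := k • o) (by rw [gromovProd_comm]; linarith)
  linarith

theorem IsFourPointHyperbolic.tendsto_gromovProd_of_forall_not_isLoxodromicAt
    (h : IsFourPointHyperbolic X δ) (hno : ∀ g : G, ¬ IsLoxodromicAt δ o g) {ι : Type*}
    {l : Filter ι} {a b : ι → G} (ha : Tendsto (fun i => dist (a i • o) o) l atTop)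
    (hb : Tendsto (fun i => dist (b i • o) o) l atTop) :
    Tendsto (fun i => gromovProd o (a i • o) (b i • o)) l atTop := by
  refine tendsto_atTop_mono
    (fun i => h.min_dist_sub_le_gromovProd (hno (a i)) (hno (b i)) (hno _)) ?_
  simp only [sub_eq_add_neg]
  exact (tendsto_atTop_add_const_right _ _ (tendsto_inf_atTop _ ha hb)).atTop_div_const two_pos

theorem IsFourPointHyperbolic.fixesBoundaryPoint_of_forall_not_isLoxodromicAt
    (h : IsFourPointHyperbolic X δ) (hno : ∀ g : G, ¬ IsLoxodromicAt δ o g)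
    (hunb : ¬ Bornology.IsBounded (MulAction.orbit G o)) : FixesBoundaryPoint G o := by
  obtain ⟨g, hg⟩ := exists_tendsto_dist_smul_of_not_isBounded_orbit hunb
  refine ⟨fun n => g n • o, ?_, fun f => ?_⟩
  · rw [IsGromovSeq, ← prod_atTop_atTop_eq]
    exact h.tendsto_gromovProd_of_forall_not_isLoxodromicAt hno (hg.comp tendsto_fst)
      (hg.comp tendsto_snd)
  · have hfg : Tendsto (fun n => dist ((f * g n) • o) o) atTop atTop := by
      refine tendsto_atTop_mono (fun n => ?_)
        (tendsto_atTop_add_const_right _ (-dist (f • o) o) hg)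
      have := dist_triangle ((f * g n) • o) o (f • o)
      rw [mul_smul, dist_smul, dist_comm o] at this
      rw [mul_smul]
      linarith
    have := h.tendsto_gromovProd_of_forall_not_isLoxodromicAt hno hfg hg
    simp only [mul_smul] at this
    exact this

theorem IsLoxodromicAt.exists_freeGroup_or_fixesBoundaryPoint {g : G} (hg : IsLoxodromicAt δ o g)
    (h : IsFourPointHyperbolic X δ) :
    (∃ f : FreeGroup (Fin 2) →* G, Function.Injective f) ∨
      ∃ H : Subgroup G, H.FiniteIndex ∧ FixesBoundaryPoint H o := by
  have hs : ∀ b, IsGromovSeq o (powOrbit o (letter g b)) := fun b =>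
    (hg.letter_apply b).isGromovSeq_powOrbit h
  by_cases hcover : ∀ k : G, ∃ a b,
      Asymptotic o (k • powOrbit o (letter g a)) (powOrbit o (letter g b))
  · obtain ⟨b, hb⟩ := exists_finiteIndex_boundaryStabilizer h hs hcover
    exact Or.inr ⟨_, hb, fixesBoundaryPoint_boundaryStabilizer h (hs b)⟩
  · push Not at hcover
    obtain ⟨k, hk⟩ := hcover
    exact Or.inl (hg.exists_freeGroup_injective h k fun a b =>
      h.isTransverse_of_not_asymptotic ((hs a).smul k) (hs b) (hk a b))

theorem IsFourPointHyperbolic.exists_freeGroup_or_isBounded_or_fixesBoundaryPoint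
    (h : IsFourPointHyperbolic X δ) (o : X) :
    (∃ f : FreeGroup (Fin 2) →* G, Function.Injective f) ∨
      Bornology.IsBounded (MulAction.orbit G o) ∨
        ∃ H : Subgroup G, H.FiniteIndex ∧ FixesBoundaryPoint H o := by
  by_cases hlox : ∃ g : G, IsLoxodromicAt δ o g
  · obtain ⟨g, hg⟩ := hlox
    exact (hg.exists_freeGroup_or_fixesBoundaryPoint h).imp_right Or.inr
  · refine Or.inr (or_iff_not_imp_left.2 fun hunb => ⟨⊤, inferInstance, ?_⟩)
    obtain ⟨u, hu, hfix⟩ :=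
      h.fixesBoundaryPoint_of_forall_not_isLoxodromicAt (not_exists.1 hlox) hunb
    exact ⟨u, hu, fun g => hfix g⟩

end Trichotomy

/-! ### Busemann quasimorphisms -/

section Quasimorphism

variable {G : Type*} [Group G]

/-- `β` fails to be a homomorphism to the additive group of `V` by at most `E`. -/
def IsQuasimorphism {V : Type*} [SeminormedAddCommGroup V] (β : G → V) (E : ℝ) : Prop :=
  ∀ a b, ‖β (a * b) - β a - β b‖ ≤ E

theorem IsQuasimorphism.pi {ι : Type*} [Fintype ι] {V : ι → Type*}
    [∀ i, SeminormedAddCommGroup (V i)] {β : ∀ i, G → V i} {E : ι → ℝ}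
    (h : ∀ i, IsQuasimorphism (β i) (E i)) : IsQuasimorphism (fun g i => β i g) ‖E‖ := fun a b =>
  (pi_norm_le_iff_of_nonneg (norm_nonneg E)).2 fun i =>
    (h i a b).trans ((Real.le_norm_self _).trans (norm_le_pi_norm E i))

/-- Every finite set of elements `f` displaces some pair of points at distance at least `R` by at
most `‖β f‖ + C`. Together with acylindricity this makes `β` proper. -/
def ControlsDisplacement (Y : Type*) [PseudoMetricSpace Y] [MulAction G Y] {V : Type*}
    [SeminormedAddCommGroup V] (β : G → V) (C R : ℝ) : Prop :=
  ∀ F : Finset G, ∃ x y : Y, R ≤ dist x y ∧ ∀ f ∈ F, f ∈ coarseStab2 G (‖β f‖ + C) x y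

theorem coarseStab2_mono {Y : Type*} [PseudoMetricSpace Y] [MulAction G Y] {ε ε' : ℝ}
    (h : ε ≤ ε') (x y : Y) : coarseStab2 G ε x y ⊆ coarseStab2 G ε' x y :=
  fun _ hg => ⟨hg.1.trans h, hg.2.trans h⟩

theorem ControlsDisplacement.pi {ι : Type*} [Fintype ι] {X : ι → Type*}
    [∀ i, PseudoMetricSpace (X i)] [∀ i, MulAction G (X i)] {V : ι → Type*}
    [∀ i, SeminormedAddCommGroup (V i)] {β : ∀ i, G → V i} {C R : ι → ℝ}
    (h : ∀ i, ControlsDisplacement (X i) (β i) (C i) (R i)) (j : ι) :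
    ControlsDisplacement (∀ i, X i) (fun g i => β i g) ‖C‖ (R j) := by
  intro F
  choose x y hxy hF using fun i => h i F
  refine ⟨x, y, (hxy j).trans (dist_le_pi_dist x y j), fun f hf => ?_⟩
  have hle (i : ι) : ‖β i f‖ + C i ≤ ‖fun i => β i f‖ + ‖C‖ :=
    add_le_add (norm_le_pi_norm (fun i => β i f) i)
      ((Real.le_norm_self _).trans (norm_le_pi_norm C i))
  have hf_mem (i : ι) := coarseStab2_mono (hle i) _ _ (hF i f hf)
  exact ⟨(dist_pi_le_iff (by positivity)).2 fun i => (hf_mem i).1,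
    (dist_pi_le_iff (by positivity)).2 fun i => (hf_mem i).2⟩

theorem IsAcylindricalAction.finite_norm_le {Y : Type*} [PseudoMetricSpace Y] [MulAction G Y]
    {V : Type*} [SeminormedAddCommGroup V] (hG : IsAcylindricalAction G Y) {β : G → V} {C : ℝ}
    (hβ : ∀ R, ControlsDisplacement Y β C R) (r : ℝ) : {g | ‖β g‖ ≤ r}.Finite := by
  by_contra hinf
  obtain ⟨R, N, -, hN⟩ := hG (|r| + |C| + 1) (by positivity)
  obtain ⟨F, hFr, hFcard⟩ := Set.Infinite.exists_subset_card_eq hinf (N + 1)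
  obtain ⟨x, y, hxy, hF⟩ := hβ R F
  obtain ⟨hfin, hcard⟩ := hN x y hxy
  have hsub : (F : Set G) ⊆ coarseStab2 G (|r| + |C| + 1) x y := fun f hf => by
    have : ‖β f‖ ≤ r := hFr hf
    exact coarseStab2_mono (by linarith [le_abs_self r, le_abs_self C]) x y (hF f hf)
  have := ncard_le_ncard hsub hfin
  rw [ncard_coe_finset, hFcard] at this
  omega

theorem IsAcylindricalAction.subgroup {Y : Type*} [PseudoMetricSpace Y] [MulAction G Y]
    (hG : IsAcylindricalAction G Y) (H : Subgroup G) : IsAcylindricalAction H Y := by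
  intro ε hε
  obtain ⟨R, N, hR, hN⟩ := hG ε hε
  refine ⟨R, N, hR, fun x y hxy => ?_⟩
  obtain ⟨hfin, hcard⟩ := hN x y hxy
  have hmaps : MapsTo Subtype.val (coarseStab2 H ε x y) (coarseStab2 G ε x y) := fun _ hg => hg
  exact ⟨hfin.of_injOn hmaps Subtype.val_injective.injOn,
    (ncard_le_ncard_of_injOn _ hmaps Subtype.val_injective.injOn hfin).trans hcard⟩

end Quasimorphism

section Busemann

open Filter

variable {X : Type*} [PseudoMetricSpace X] {δ : ℝ} {o : X}

/-- The difference `d(z, p) - d(z, o)`; as `z` tends to a boundary point it becomes, up to a bounded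
error, the Busemann function of that point normalized at `o`. -/
def busemannDiff (o z p : X) : ℝ :=
  dist z p - dist z o

theorem IsFourPointHyperbolic.busemannDiff_le (h : IsFourPointHyperbolic X δ) {u v p : X}
    (hp : dist p o ≤ gromovProd o u v) :
    busemannDiff o u p ≤ busemannDiff o v p + 2 * δ := by
  have hlong : dist u v + dist p o ≤ dist u o + dist p v := by
    rw [gromovProd] at hp
    linarith [dist_triangle v p o, dist_comm p v]
  have := h.dist_add_dist_le u p v o
  rw [max_eq_right hlong, dist_comm p v] at this
  rw [busemannDiff, busemannDiff]
  linarith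

theorem IsFourPointHyperbolic.abs_busemannDiff_sub_le (h : IsFourPointHyperbolic X δ) {u v p : X}
    (hp : dist p o ≤ gromovProd o u v) :
    |busemannDiff o u p - busemannDiff o v p| ≤ 2 * δ := by
  have := h.busemannDiff_le hp
  have := h.busemannDiff_le (gromovProd_comm o u v ▸ hp)
  exact abs_sub_le_iff.2 ⟨by linarith, by linarith⟩

variable {G : Type*} [Group G] [MulAction G X]

/-- `β f` is, up to `2 * δ`, the change of the Busemann function of the limit of `u` along
`o ↦ f⁻¹ • o`. -/
def IsBusemannQuasicharacter (δ : ℝ) (o : X) (u : ℕ → X) (β : G → ℝ) : Prop :=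
  ∀ f, ∀ᶠ n in atTop, |busemannDiff o (u n) (f⁻¹ • o) - β f| ≤ 2 * δ

theorem IsGromovSeq.exists_isBusemannQuasicharacter {u : ℕ → X} (hu : IsGromovSeq o u)
    (h : IsFourPointHyperbolic X δ) :
    ∃ β : G → ℝ, IsBusemannQuasicharacter δ o u β := by
  choose N hN using fun f : G => hu.exists_forall_lt (dist (f⁻¹ • o) o)
  refine ⟨fun f => busemannDiff o (u (N f)) (f⁻¹ • o), fun f => ?_⟩
  filter_upwards [eventually_ge_atTop (N f)] with n hn
  exact h.abs_busemannDiff_sub_le (hN f n (N f) hn le_rfl).le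

variable [IsIsometricSMul G X]

theorem busemannDiff_mul_inv_smul (f g : G) (z : X) :
    busemannDiff o z ((f * g)⁻¹ • o) =
      busemannDiff o (g • z) (f⁻¹ • o) + busemannDiff o z (g⁻¹ • o) := by
  simp only [busemannDiff, mul_inv_rev, mul_smul, dist_inv_smul_right]
  ring

theorem IsBusemannQuasicharacter.isQuasimorphism {u : ℕ → X} {β : G → ℝ}
    (hβ : IsBusemannQuasicharacter δ o u β) (h : IsFourPointHyperbolic X δ)
    (hfix : ∀ g : G, Asymptotic o (g • u) u) : IsQuasimorphism β (8 * δ) := by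
  intro f g
  obtain ⟨n, hfg, hf, hg, hn⟩ := ((hβ (f * g)).and <| (hβ f).and <| (hβ g).and <|
    (hfix g).eventually_ge_atTop (dist (f⁻¹ • o) o)).exists
  have hgu := h.abs_busemannDiff_sub_le hn
  rw [busemannDiff_mul_inv_smul] at hfg
  rw [Pi.smul_apply] at hgu
  rw [abs_le] at hfg hf hg hgu
  rw [Real.norm_eq_abs, abs_le]
  constructor <;> linarith

theorem IsFourPointHyperbolic.dist_smul_le (h : IsFourPointHyperbolic X δ) {u x : X} {f : G}
    (hx : dist x o + dist x u = dist u o) (hf : dist (f • o) o ≤ dist x o)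
    (hu : dist x o + dist (f • o) o ≤ gromovProd o u (f • u)) :
    dist (f • x) x ≤ |busemannDiff o u (f⁻¹ • o)| + 4 * δ := by
  set b := busemannDiff o u (f⁻¹ • o)
  have hb : dist u (f⁻¹ • o) = dist u o + b := by simp only [b, busemannDiff]; ring
  have hb_le := le_abs_self b
  have hb_ge := neg_abs_le b
  have := h.nonneg o
  have hfx_u : dist (f • x) u ≤ dist x u + |b| + 2 * δ := by
    have hfxo : dist (f • x) o ≤ gromovProd o u (f • u) := by
      linarith [dist_triangle (f • x) (f • o) o, dist_smul f x o]
    have := h.busemannDiff_le hfxo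
    rw [busemannDiff, busemannDiff, dist_smul, ← dist_inv_smul_right, hb, dist_comm u (f • x),
      dist_comm u x] at this
    linarith
  have hfx_o : dist (f • x) o ≤ dist x o + |b| + 2 * δ := by
    have := h.dist_add_dist_le x (f⁻¹ • o) o u
    rw [dist_comm o u, dist_comm _ u, hb, dist_inv_smul_self, dist_inv_smul_right] at this
    rcases le_max_iff.1 this with hmax | hmax <;> linarith [dist_nonneg (x := f • o) (y := o)]
  have := h.dist_add_dist_le (f • x) x o u
  rw [dist_comm o u] at this
  rcases le_max_iff.1 this with hmax | hmax <;> linarith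

-- The two points lie on a geodesic from `o` to a far term `u n`, beyond all `dist (f • o) o` and
-- before the point where this geodesic starts to diverge from its images under `F`.
theorem IsBusemannQuasicharacter.controlsDisplacement {u : ℕ → X} {β : G → ℝ}
    (hβ : IsBusemannQuasicharacter δ o u β) (h : IsFourPointHyperbolic X δ)
    (hgeo : IsGeodesicSpace X) (hu : IsGromovSeq o u) (hfix : ∀ g : G, Asymptotic o (g • u) u)
    (R : ℝ) : ControlsDisplacement X β (6 * δ) R := by
  intro F
  obtain ⟨t, ht₀, ht⟩ : ∃ t, 0 ≤ t ∧ ∀ f ∈ F, dist (f • o) o ≤ t :=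
    ⟨∑ f ∈ F, dist (f • o) o, Finset.sum_nonneg fun _ _ => dist_nonneg, fun f hf =>
      Finset.single_le_sum (f := fun f : G => dist (f • o) o) (fun _ _ => dist_nonneg) hf⟩
  obtain ⟨n, hasymp, hbus, hfar⟩ := (((eventually_all_finset F).2 fun f _ =>
    (hfix f).symm.eventually_ge_atTop (t + |R| + t)).and <|
      ((eventually_all_finset F).2 fun f _ => hβ f).and <|
        hu.asymptotic_self.eventually_ge_atTop (t + |R|)).exists
  rw [gromovProd_self, dist_comm] at hfar
  obtain ⟨α, hα⟩ := hgeo o (u n)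
  have hmem {s : ℝ} (hts : t ≤ s) (hsR : s ≤ t + |R|) : s ∈ Icc 0 (dist o (u n)) :=
    ⟨ht₀.trans hts, hsR.trans hfar⟩
  have hdisp {s : ℝ} (hts : t ≤ s) (hsR : s ≤ t + |R|) {f : G} (hf : f ∈ F) :
      dist (f • α s) (α s) ≤ ‖β f‖ + 6 * δ := by
    have hs_o : dist (α s) o = s := hα.dist_left (hmem hts hsR)
    have hs_u := hα.dist_right (hmem hts hsR)
    have hft := ht f hf
    have := h.dist_smul_le (o := o) (u := u n) (x := α s) (f := f)
      (by rw [hs_o, hs_u, dist_comm o]; ring) (by linarith) (by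
        have := hasymp f hf
        rw [Pi.smul_apply] at this
        linarith)
    have := abs_sub_abs_le_abs_sub (busemannDiff o (u n) (f⁻¹ • o)) (β f)
    rw [Real.norm_eq_abs]
    linarith [hbus f hf]
  have htR : t ≤ t + |R| := le_add_of_nonneg_right (abs_nonneg R)
  refine ⟨α t, α (t + |R|), ?_, fun f hf => ⟨hdisp le_rfl htR hf, hdisp htR le_rfl hf⟩⟩
  rw [hα.2.2 _ (hmem le_rfl htR) _ (hmem htR le_rfl), sub_add_cancel_left, abs_neg, abs_abs]
  exact le_abs_self R

theorem FixesBoundaryPoint.exists_controlsDisplacement (hfix : FixesBoundaryPoint G o)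
    (h : IsFourPointHyperbolic X δ) (hgeo : IsGeodesicSpace X) :
    ∃ (β : G → ℝ) (E C : ℝ), IsQuasimorphism β E ∧ ∀ R, ControlsDisplacement X β C R := by
  obtain ⟨u, hu, hfixu⟩ := hfix
  obtain ⟨β, hβ⟩ := hu.exists_isBusemannQuasicharacter (G := G) h
  exact ⟨β, 8 * δ, 6 * δ, hβ.isQuasimorphism h hfixu,
    hβ.controlsDisplacement h hgeo hu hfixu⟩

end Busemann

/-! ### Proper quasimorphisms -/

section Homogenization

open Filter Topology

variable {G V : Type*} [Group G] [NormedAddCommGroup V] {β : G → V} {E : ℝ}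

theorem map_mul_eq_add_of_tendsto {β : ℕ → G → V} {E : ℕ → ℝ}
    (h : ∀ n, IsQuasimorphism (β n) (E n)) (hE : Tendsto E atTop (𝓝 0)) {φ : G → V}
    (hφ : ∀ a, Tendsto (fun n => β n a) atTop (𝓝 (φ a))) (a b : G) :
    φ (a * b) = φ a + φ b := by
  have hlim : Tendsto (fun n => β n (a * b) - β n a - β n b) atTop
      (𝓝 (φ (a * b) - φ a - φ b)) := ((hφ _).sub (hφ a)).sub (hφ b)
  have hzero : Tendsto (fun n => β n (a * b) - β n a - β n b) atTop (𝓝 0) :=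
    squeeze_zero_norm (fun n => h n a b) hE
  rw [← sub_eq_zero, ← sub_sub]
  exact tendsto_nhds_unique hlim hzero

variable [NormedSpace ℝ V]

/-- The averages of `β` along the powers `a ^ 2 ^ n`, whose limit is the homogenization of `β`. -/
noncomputable def dyadicMean (β : G → V) (n : ℕ) (a : G) : V :=
  ((2 : ℝ) ^ n)⁻¹ • β (a ^ 2 ^ n)

theorem IsQuasimorphism.dist_dyadicMean_succ_le (h : IsQuasimorphism β E) (a : G) (n : ℕ) :
    dist (dyadicMean β n a) (dyadicMean β (n + 1) a) ≤ E / 2 / 2 ^ n := by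
  have hsub : dyadicMean β (n + 1) a - dyadicMean β n a = ((2 : ℝ) ^ (n + 1))⁻¹ •
      (β (a ^ 2 ^ n * a ^ 2 ^ n) - β (a ^ 2 ^ n) - β (a ^ 2 ^ n)) := by
    rw [dyadicMean, dyadicMean, ← pow_add, ← two_mul, ← pow_succ']
    module
  rw [dist_comm, dist_eq_norm, hsub, norm_smul, Real.norm_of_nonneg (by positivity)]
  calc ((2 : ℝ) ^ (n + 1))⁻¹ * _ ≤ ((2 : ℝ) ^ (n + 1))⁻¹ * E := by gcongr; exact h _ _
    _ = E / 2 / 2 ^ n := by field_simp; ring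

theorem IsQuasimorphism.isQuasimorphism_dyadicMean {A : Type*} [CommGroup A] {β : A → V}
    (h : IsQuasimorphism β E) (n : ℕ) :
    IsQuasimorphism (dyadicMean β n) (((2 : ℝ) ^ n)⁻¹ * E) := by
  intro a b
  rw [dyadicMean, dyadicMean, dyadicMean, ← smul_sub, ← smul_sub, mul_pow, norm_smul,
    Real.norm_of_nonneg (by positivity)]
  gcongr
  exact h _ _

theorem IsQuasimorphism.exists_monoidHom_norm_sub_le [CompleteSpace V] {A : Type*} [CommGroup A]
    {β : A → V} (h : IsQuasimorphism β E) :
    ∃ φ : A →* Multiplicative V, ∀ a, ‖β a - (φ a).toAdd‖ ≤ E := by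
  choose φ hφ using fun a =>
    cauchySeq_tendsto_of_complete (cauchySeq_of_le_geometric_two (h.dist_dyadicMean_succ_le a))
  have hE : Tendsto (fun n : ℕ => ((2 : ℝ) ^ n)⁻¹ * E) atTop (𝓝 0) := by
    simpa using ((tendsto_pow_atTop_atTop_of_one_lt one_lt_two).inv_tendsto_atTop).mul_const E
  have hadd := map_mul_eq_add_of_tendsto h.isQuasimorphism_dyadicMean hE hφ
  refine ⟨MonoidHom.mk' (fun a => Multiplicative.ofAdd (φ a)) fun a b =>
    congrArg Multiplicative.ofAdd (hadd a b), fun a => ?_⟩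
  have := dist_le_of_le_geometric_two_of_tendsto₀ (h.dist_dyadicMean_succ_le a) (hφ a)
  simpa [dyadicMean, dist_eq_norm] using this

end Homogenization

section FiniteCommutator

open scoped commutatorElement

variable {G V : Type*} [Group G] [NormedAddCommGroup V] {β : G → V} {E : ℝ}

theorem IsQuasimorphism.norm_commutatorElement_le (h : IsQuasimorphism β E) (a b : G) :
    ‖β ⁅a, b⁆‖ ≤ E + E + E := by
  have hmul : ⁅a, b⁆ * (b * a) = a * b := by rw [commutatorElement_def]; group
  have heq : β ⁅a, b⁆ = (β (a * b) - β a - β b) - (β (b * a) - β b - β a) -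
      (β (⁅a, b⁆ * (b * a)) - β ⁅a, b⁆ - β (b * a)) := by
    rw [hmul]
    abel
  rw [heq]
  exact norm_sub_le_of_le (norm_sub_le_of_le (h a b) (h b a)) (h _ _)

theorem IsQuasimorphism.finite_commutator (h : IsQuasimorphism β E)
    (hproper : ∀ r, {g | ‖β g‖ ≤ r}.Finite) : Finite (commutator G) := by
  have hsub : commutatorSet G ⊆ {g | ‖β g‖ ≤ E + E + E} := by
    rintro _ ⟨a, b, rfl⟩
    exact h.norm_commutatorElement_le a b
  have := ((hproper _).subset hsub).to_subtype
  infer_instance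

theorem IsQuasimorphism.exists_norm_sub_le_of_map_eq (h : IsQuasimorphism β E) {Q : Type*}
    [Group Q] (f : G →* Q) [Finite f.ker] :
    ∃ M, ∀ a b, f a = f b → ‖β a - β b‖ ≤ M := by
  obtain ⟨M, hM⟩ := (finite_range fun c : f.ker => ‖β c‖).bddAbove
  refine ⟨E + M, fun a b hab => ?_⟩
  have hker : a * b⁻¹ ∈ f.ker := by rw [f.mem_ker, map_mul, map_inv, hab, mul_inv_cancel]
  have heq : β a - β b = (β (a * b⁻¹ * b) - β (a * b⁻¹) - β b) + β (a * b⁻¹) := by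
    rw [inv_mul_cancel_right]
    abel
  rw [heq]
  exact norm_add_le_of_le (h _ _) (hM ⟨⟨_, hker⟩, rfl⟩)

theorem IsQuasimorphism.exists_isQuasimorphism_of_surjective (h : IsQuasimorphism β E)
    {Q : Type*} [Group Q] {f : G →* Q} (hf : Function.Surjective f) [Finite f.ker] :
    ∃ (γ : Q → V) (E' M : ℝ), IsQuasimorphism γ E' ∧ ∀ g, ‖β g - γ (f g)‖ ≤ M := by
  obtain ⟨M, hM⟩ := h.exists_norm_sub_le_of_map_eq f
  choose s hs using hf
  refine ⟨β ∘ s, M + E, M, fun a b => ?_, fun g => hM _ _ (hs _).symm⟩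
  have heq : β (s (a * b)) - β (s a) - β (s b) =
      (β (s (a * b)) - β (s a * s b)) + (β (s a * s b) - β (s a) - β (s b)) := by abel
  simp only [Function.comp_apply]
  rw [heq]
  exact norm_add_le_of_le (hM _ _ (by simp only [map_mul, hs])) (h _ _)

theorem IsQuasimorphism.exists_monoidHom_of_finite_commutator [NormedSpace ℝ V] [CompleteSpace V]
    [Finite (commutator G)] (h : IsQuasimorphism β E) :
    ∃ (ψ : G →* Multiplicative V) (M : ℝ), ∀ g, ‖β g - (ψ g).toAdd‖ ≤ M := by
  have : Finite (Abelianization.of (G := G)).ker := by rwa [Abelianization.ker_of]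
  obtain ⟨γ, E', M, hγ, hM⟩ := h.exists_isQuasimorphism_of_surjective
    (f := Abelianization.of (G := G)) QuotientGroup.mk_surjective
  obtain ⟨φ, hφ⟩ := hγ.exists_monoidHom_norm_sub_le
  refine ⟨φ.comp Abelianization.of, M + E', fun g => ?_⟩
  rw [← sub_add_sub_cancel (β g) (γ (Abelianization.of g))]
  exact norm_add_le_of_le (hM g) (hφ _)

end FiniteCommutator

section FreeAbelian

variable {G V : Type*} [Group G] [NormedAddCommGroup V]

/-- `G` is an extension of `ℤᵏ` by a finite group. -/
def FiniteByFreeAbelian (G : Type*) [Group G] (k : ℕ) : Prop :=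
  ∃ (K : Subgroup G) (_ : K.Normal), Finite K ∧
    Nonempty ((G ⧸ K) ≃* Multiplicative (Fin k → ℤ))

theorem FiniteByFreeAbelian.pos [Infinite G] {k : ℕ} (h : FiniteByFreeAbelian G k) : 0 < k := by
  obtain ⟨K, hK, hKfin, ⟨e⟩⟩ := h
  refine Nat.pos_of_ne_zero fun hk => ?_
  subst hk
  have : Finite (Multiplicative (Fin 0 → ℤ)) := inferInstanceAs (Finite (Fin 0 → ℤ))
  have : Finite (G ⧸ K) := .of_equiv _ e.symm.toEquiv
  exact not_finite_iff_infinite.2 ‹_› (Finite.of_subgroup_quotient K)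

variable [NormedSpace ℝ V] [FiniteDimensional ℝ V]

theorem exists_addEquiv_of_finite_norm_lt_one (L : AddSubgroup V)
    (hL : {x : L | ‖x‖ < 1}.Finite) :
    ∃ k ≤ Module.finrank ℝ V, Nonempty (L ≃+ (Fin k → ℤ)) := by
  let M := AddSubgroup.toIntSubmodule L
  have hspan : Submodule.span ℤ (L : Set V) = M := Submodule.span_eq M
  have hdisc : DiscreteTopology M := by
    refine discreteTopology_of_isOpen_singleton_zero (isOpen_singleton_of_finite_mem_nhds 0
      (Metric.ball_mem_nhds 0 one_pos) (hL.subset fun x hx => ?_))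
    exact mem_ball_zero_iff.1 hx
  have hrank := Real.finrank_eq_int_finrank_of_discrete (s := (L : Set V)) (hspan ▸ hdisc)
  rw [Set.finrank, Set.finrank, hspan] at hrank
  exact ⟨Module.finrank ℤ M, hrank ▸ Submodule.finrank_le _,
    ⟨(Module.finBasis ℤ M).equivFun.toAddEquiv⟩⟩

theorem exists_finiteByFreeAbelian_of_finite_norm_lt_one (φ : G →* Multiplicative V)
    (hφ : {g | ‖(φ g).toAdd‖ < 1}.Finite) :
    ∃ k ≤ Module.finrank ℝ V, FiniteByFreeAbelian G k := by
  have hker : Finite φ.ker := (hφ.subset fun g hg => by simp [φ.mem_ker.1 hg]).to_subtype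
  have hL : {x : Subgroup.toAddSubgroup' φ.range | ‖x‖ < 1}.Finite := by
    refine Set.Finite.of_injOn (t := (fun g => (φ g).toAdd) '' {g | ‖(φ g).toAdd‖ < 1})
      (f := Subtype.val) ?_ Subtype.val_injective.injOn (hφ.image _)
    rintro ⟨x, hx⟩ hlt
    obtain ⟨g, hg⟩ := MonoidHom.mem_range.1 hx
    exact ⟨g, (congrArg (‖Multiplicative.toAdd ·‖) hg).trans_lt hlt,
      congrArg Multiplicative.toAdd hg⟩
  obtain ⟨k, hk, ⟨e⟩⟩ := exists_addEquiv_of_finite_norm_lt_one _ hL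
  let e' : φ.range ≃* Multiplicative (Subgroup.toAddSubgroup' φ.range) := MulEquiv.refl _
  exact ⟨k, hk, φ.ker, inferInstance, hker,
    ⟨(QuotientGroup.quotientKerEquivRange φ).trans (e'.trans e.toMultiplicative)⟩⟩

theorem IsQuasimorphism.exists_finiteByFreeAbelian {β : G → V} {E : ℝ} (h : IsQuasimorphism β E)
    (hproper : ∀ r, {g | ‖β g‖ ≤ r}.Finite) :
    ∃ k ≤ Module.finrank ℝ V, FiniteByFreeAbelian G k := by
  have := FiniteDimensional.complete ℝ V
  have := h.finite_commutator hproper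
  obtain ⟨ψ, M, hψ⟩ := h.exists_monoidHom_of_finite_commutator
  refine exists_finiteByFreeAbelian_of_finite_norm_lt_one ψ
    ((hproper (M + 1)).subset fun g hg => ?_)
  rw [mem_ofPred_eq, ← sub_add_cancel (β g) (ψ g).toAdd]
  exact norm_add_le_of_le (hψ g) (le_of_lt hg)

end FreeAbelian

/-! ### Products -/

section Product

variable {G : Type*} [Group G]

theorem exists_controlsDisplacement {X : Type*} [PseudoMetricSpace X] [MulAction G X]
    [IsIsometricSMul G X] {δ : ℝ} {o : X} (h : IsFourPointHyperbolic X δ)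
    (hgeo : IsGeodesicSpace X)
    (ho : Bornology.IsBounded (MulAction.orbit G o) ∨ FixesBoundaryPoint G o) :
    ∃ (β : G → ℝ) (E C : ℝ), IsQuasimorphism β E ∧
      ∀ R, (FixesBoundaryPoint G o ∨ R ≤ 0) → ControlsDisplacement X β C R := by
  by_cases hfix : FixesBoundaryPoint G o
  · obtain ⟨β, E, C, hβ, hC⟩ := hfix.exists_controlsDisplacement h hgeo
    exact ⟨β, E, C, hβ, fun R _ => hC R⟩
  · obtain ⟨C, hC⟩ := isBounded_iff.1 (ho.resolve_right hfix)
    refine ⟨0, 0, C, fun a b => by simp, fun R hR F => ⟨o, o, ?_, fun f _ => ?_⟩⟩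
    · rw [dist_self]
      exact hR.resolve_left hfix
    · have := hC (MulAction.mem_orbit o f) (MulAction.mem_orbit_self o)
      simpa [coarseStab2] using this

theorem exists_not_isBounded_orbit_of_pi {ι : Type*} {X : ι → Type*} [∀ i, Bornology (X i)]
    [∀ i, MulAction G (X i)] {x : ∀ i, X i}
    (hx : ¬ Bornology.IsBounded (MulAction.orbit G x)) :
    ∃ i, ¬ Bornology.IsBounded (MulAction.orbit G (x i)) := by
  contrapose! hx
  refine Bornology.forall_isBounded_image_eval_iff.1 fun i => (hx i).subset ?_
  rintro _ ⟨_, ⟨g, rfl⟩, rfl⟩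
  exact MulAction.mem_orbit (x i) g

theorem infinite_of_not_isBounded_orbit {Y : Type*} [PseudoMetricSpace Y] [MulAction G Y] {y : Y}
    (hy : ¬ Bornology.IsBounded (MulAction.orbit G y)) : Infinite G :=
  not_finite_iff_infinite.1 fun _ => hy (finite_range _).isBounded

variable {ι : Type*} [Fintype ι] {X : ι → Type*} [∀ i, PseudoMetricSpace (X i)]
  [∀ i, MulAction G (X i)] [∀ i, IsIsometricSMul G (X i)] {δ : ι → ℝ}

theorem IsAcylindricalAction.exists_finiteByFreeAbelian
    (hG : IsAcylindricalAction G (∀ i, X i)) (hhyp : ∀ i, IsFourPointHyperbolic (X i) (δ i))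
    (hgeo : ∀ i, IsGeodesicSpace (X i)) {o : ∀ i, X i}
    (ho : ∀ i, Bornology.IsBounded (MulAction.orbit G (o i)) ∨ FixesBoundaryPoint G (o i))
    {j : ι} (hj : FixesBoundaryPoint G (o j)) :
    ∃ k ≤ Fintype.card ι, FiniteByFreeAbelian G k := by
  classical
  choose β E C hβ hC using fun i => exists_controlsDisplacement (hhyp i) (hgeo i) (ho i)
  have hcontrol (R : ℝ) : ControlsDisplacement (∀ i, X i) (fun g i => β i g) ‖C‖ R := by
    have hfactor (i : ι) : ControlsDisplacement (X i) (β i) (C i) ((Pi.single j R : ι → ℝ) i) := by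
      refine hC i _ ?_
      rcases eq_or_ne i j with rfl | hij
      · exact Or.inl hj
      · exact Or.inr (by simp [hij])
    simpa only [Pi.single_eq_same] using ControlsDisplacement.pi hfactor j
  rw [← Module.finrank_fintype_fun_eq_card ℝ]
  exact (IsQuasimorphism.pi hβ).exists_finiteByFreeAbelian (hG.finite_norm_le hcontrol)

theorem tits_alternative_general (hgeo : ∀ i, IsGeodesicSpace (X i))
    (hhyp : ∀ i, IsDeltaHyperbolic (X i) (δ i)) (hacyl : IsAcylindricalAction G (∀ i, X i))
    (hnotell : ∃ x : ∀ i, X i, ¬ Bornology.IsBounded (MulAction.orbit G x)) :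
    (∃ f : FreeGroup (Fin 2) →* G, Function.Injective f) ∨
      ∃ k : ℕ, 1 ≤ k ∧ k ≤ Fintype.card ι ∧ ∃ G' : Subgroup G, G'.FiniteIndex ∧
        FiniteByFreeAbelian G' k := by
  refine or_iff_not_imp_left.2 fun hfree => ?_
  obtain ⟨o, ho⟩ := hnotell
  obtain ⟨j, hj⟩ := exists_not_isBounded_orbit_of_pi ho
  have hhyp' (i : ι) := (hhyp i).isFourPointHyperbolic (hgeo i)
  have hfactor (i : ι) : ∃ H : Subgroup G, H.FiniteIndex ∧
      (Bornology.IsBounded (MulAction.orbit G (o i)) ∨ FixesBoundaryPoint H (o i)) := by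
    rcases ((hhyp' i).exists_freeGroup_or_isBounded_or_fixesBoundaryPoint (o i)).resolve_left
      hfree with hbdd | ⟨H, hH, hfix⟩
    · exact ⟨⊤, inferInstance, Or.inl hbdd⟩
    · exact ⟨H, hH, Or.inr hfix⟩
  choose H hH hfix using hfactor
  obtain ⟨H', hindex, hle⟩ : ∃ H' : Subgroup G, H'.FiniteIndex ∧ ∀ i, H' ≤ H i :=
    ⟨⨅ i, H i, Subgroup.finiteIndex_iInf hH, iInf_le H⟩
  have hfix' (i : ι) := (hfix i).imp (·.subset (MulAction.orbit_subgroup_subset H' (o i)))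
    (·.of_le (hle i))
  obtain ⟨k, hk, hH'k⟩ := (hacyl.subgroup H').exists_finiteByFreeAbelian hhyp' hgeo hfix'
    (((hfix j).resolve_left hj).of_le (hle j))
  have : Infinite H' := not_finite_iff_infinite.1 fun _ =>
    (infinite_of_not_isBounded_orbit ho).not_finite (Finite.of_subgroup_quotient H')
  exact ⟨k, hH'k.pos, hk, H', hindex, hH'k⟩

end Product

/-- Tits' Alternative. If a group `Γ` acts by isometries on each factor of a
finite product of geodesic `δ`-hyperbolic spaces, and the diagonal action on the product (with
the sup metric) is acylindrical and not elliptic, then `Γ` contains a free group of rank 2 or is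
virtually isomorphic to `ℤᵏ` for some `1 ≤ k ≤ D`. -/
theorem tits_alternative
    {D : ℕ} (hD : 1 ≤ D) (δ : ℝ) (hδ : 0 ≤ δ)
    (X : Fin D → Type*) [∀ i, MetricSpace (X i)]
    (Γ : Type*) [Group Γ] [∀ i, MulAction Γ (X i)]
    (hiso : ∀ (i : Fin D) (g : Γ) (x y : X i), dist (g • x) (g • y) = dist x y)
    (hgeo : ∀ i, IsGeodesicSpace (X i))
    (hhyp : ∀ i, IsDeltaHyperbolic (X i) δ)
    (hacyl : IsAcylindricalAction Γ (∀ i, X i))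
    (hnotell : ∃ x : ∀ i, X i, ¬ Bornology.IsBounded (MulAction.orbit Γ x)) :
    (∃ f : FreeGroup (Fin 2) →* Γ, Function.Injective f) ∨
      (∃ k : ℕ, 1 ≤ k ∧ k ≤ D ∧ ∃ Γ' : Subgroup Γ, Γ'.FiniteIndex ∧
        ∃ (K : Subgroup Γ') (_ : K.Normal), Finite K ∧
          Nonempty ((Γ' ⧸ K) ≃* Multiplicative (Fin k → ℤ))) := by
  have (i : Fin D) : IsIsometricSMul Γ (X i) := ⟨fun g => Isometry.of_dist_eq (hiso i g)⟩
  simpa only [Fintype.card_fin, FiniteByFreeAbelian] using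
    tits_alternative_general hgeo hhyp hacyl hnotell
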